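/- arXiv:1607.07174 — 2 statements merged into one kernel-verified Lean document; each statement's English description precedes it below -/
import Mathlib

section
/- For all positive integers k and d, every finite simple graph G of tree-depth at most d satisfies f_k(G) ≤ (2k)^d. -/
open scoped Classical
open scoped Function

namespace InducedArboricity

/-- The edges of the subgraph of `G` induced by vertex set `S`, viewed as edges of `G`. -/
def forestEdges {V : Type*} (G : SimpleGraph V) (S : Set V) : Set (Sym2 V) :=
  {e | e ∈ G.edgeSet ∧ ∀ x ∈ e, x ∈ S}

/-- The number of edges of the connected component of `v` in `H`. -/
noncomputable def compEdgeCount {W : Type*} (H : SimpleGraph W) (v : W) : ℕ :=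
  {e | e ∈ H.edgeSet ∧ ∀ x ∈ e, H.Reachable v x}.ncard

/-- `S` induces a `k`-strong forest in `G`: the induced subgraph is acyclic and each of its
connected components has at least `k` edges. -/
def IsStrongForest {V : Type*} (G : SimpleGraph V) (k : ℕ) (S : Set V) : Prop :=
  (G.induce S).IsAcyclic ∧ ∀ v : S, k ≤ compEdgeCount (G.induce S) v

/-- An edge `e` of `G` is `k`-valid if it lies in some `k`-strong forest of `G`. -/
def KValid {V : Type*} (G : SimpleGraph V) (k : ℕ) (e : Sym2 V) : Prop :=
  ∃ S : Set V, IsStrongForest G k S ∧ e ∈ forestEdges G S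

/-- The `k`-strong induced arboricity: the least number of `k`-strong forests of `G`
covering all `k`-valid edges of `G`. -/
noncomputable def fStrong {V : Type*} (G : SimpleGraph V) (k : ℕ) : ℕ :=
  sInf {N | ∃ F : Fin N → Set V,
    (∀ i, IsStrongForest G k (F i)) ∧
    ∀ e : Sym2 V, KValid G k e → ∃ i, e ∈ forestEdges G (F i)}

/-- `G` is a `d`-shallow minor of `H`. -/
def IsShallowMinor {V W : Type*} (d : ℕ) (G : SimpleGraph V) (H : SimpleGraph W) : Prop :=
  ∃ B : V → Set W,
    Pairwise (Disjoint on B) ∧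
    (∀ v, ∃ c : B v, ∀ y : B v,
      (H.induce (B v)).Reachable c y ∧ (H.induce (B v)).dist c y ≤ d) ∧
    (∀ u v, G.Adj u v → ∃ x ∈ B u, ∃ y ∈ B v, H.Adj x y)

/-- A class of finite simple graphs, one set of graphs for each number of vertices. -/
def GraphClass : Type :=
  ∀ n : ℕ, Set (SimpleGraph (Fin n))

/-- A class of graphs has bounded expansion if for every `d` there is a constant `a` such that
every `d`-shallow minor of a member of the class has at most `a` times as many edges
as vertices. -/
def BoundedExpansion (C : GraphClass) : Prop :=
  ∀ d : ℕ, ∃ a : ℕ, ∀ (m : ℕ) (G : SimpleGraph (Fin m)),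
    (∃ n : ℕ, ∃ H ∈ C n, IsShallowMinor d G H) → G.edgeSet.ncard ≤ a * m

/-- A class of graphs is nowhere dense if for every `d` some graph is not a `d`-shallow minor
of any member of the class. -/
def NowhereDense (C : GraphClass) : Prop :=
  ∀ d : ℕ, ∃ (m : ℕ) (G : SimpleGraph (Fin m)), ¬ ∃ n : ℕ, ∃ H ∈ C n, IsShallowMinor d G H

/-- The closed neighborhood of `v` in `G`. -/
def closedNbr {V : Type*} (G : SimpleGraph V) (v : V) : Set V :=
  insert v (G.neighborSet v)

/-- The sum of the labels over the closed neighborhood of `v`. -/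
noncomputable def closedNbrSum {V : Type*} [Fintype V] (G : SimpleGraph V)
    (f : V → ℕ) (v : V) : ℕ :=
  ∑ x : V, if x ∈ closedNbr G v then f x else 0

/-- A labeling is distinguishing if adjacent vertices with different closed neighborhoods
receive different label sums over their closed neighborhoods. -/
def Distinguishing {V : Type*} [Fintype V] (G : SimpleGraph V) (f : V → ℕ) : Prop :=
  ∀ u v : V, G.Adj u v → closedNbr G u ≠ closedNbr G v →
    closedNbrSum G f u ≠ closedNbrSum G f v

/-- The adjacent closed vertex-distinguishing number of `G`. -/
noncomputable def disNumber {V : Type*} [Fintype V] (G : SimpleGraph V) : ℕ :=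
  sInf {L | 1 ≤ L ∧ ∃ f : V → ℕ, (∀ v, 1 ≤ f v ∧ f v ≤ L) ∧ Distinguishing G f}

/-- A proper coloring in which any two color classes together induce a forest. -/
def IsAcyclicColoring {V : Type*} (G : SimpleGraph V) {m : ℕ} (c : V → Fin m) : Prop :=
  (∀ u v : V, G.Adj u v → c u ≠ c v) ∧
  ∀ i j : Fin m, (G.induce {v | c v = i ∨ c v = j}).IsAcyclic

/-- The acyclic chromatic number of `G`. -/
noncomputable def chiAcyc {V : Type*} (G : SimpleGraph V) : ℕ :=
  sInf {m | ∃ c : V → Fin m, IsAcyclicColoring G c}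

/-- The edge arboricity of `G`: the least number of (not necessarily induced) forests
covering all edges of `G`. -/
noncomputable def arboricity {V : Type*} (G : SimpleGraph V) : ℕ :=
  sInf {N | ∃ F : Fin N → SimpleGraph V,
    (∀ i, F i ≤ G ∧ (F i).IsAcyclic) ∧
    ∀ e ∈ G.edgeSet, ∃ i, e ∈ (F i).edgeSet}

/-- `G` admits a tree decomposition of width at most `t`. -/
def HasTreewidthAtMost {V : Type*} (G : SimpleGraph V) (t : ℕ) : Prop :=
  ∃ (ι : Type) (T : SimpleGraph ι) (B : ι → Finset V),
    T.IsTree ∧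
    (∀ e ∈ G.edgeSet, ∃ i, ∀ x ∈ e, x ∈ B i) ∧
    (∀ v : V, (T.induce {i | v ∈ B i}).Connected) ∧
    (∀ i, (B i).card ≤ t + 1)

/-- The tree-width of `G`. -/
noncomputable def treewidth {V : Type*} (G : SimpleGraph V) : ℕ :=
  sInf {t | HasTreewidthAtMost G t}

/-- `G` has tree-depth at most `d`: there is a "forest order" on the vertices (the
ancestor order of a rooted spanning forest) in which ancestor sets are chains of at most
`d` vertices and endpoints of edges of `G` are comparable.  Equivalently, every connected
component of `G` is a subgraph of the transitive closure of a rooted tree of depth `d`. -/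
def HasTreedepthAtMost {V : Type*} (G : SimpleGraph V) (d : ℕ) : Prop :=
  ∃ le : V → V → Prop, IsPartialOrder V le ∧
    (∀ v : V, IsChain le {u | le u v}) ∧
    (∀ u v : V, G.Adj u v → le u v ∨ le v u) ∧
    (∀ v : V, {u | le u v}.ncard ≤ d)

/-- The tree-depth of `G`. -/
noncomputable def treedepth {V : Type*} (G : SimpleGraph V) : ℕ :=
  sInf {d | HasTreedepthAtMost G d}

/-- `G` is a minor of `H`, witnessed by disjoint connected branch sets. -/
def IsMinorOf {V W : Type*} (G : SimpleGraph V) (H : SimpleGraph W) : Prop :=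
  ∃ B : V → Set W,
    Pairwise (Disjoint on B) ∧
    (∀ v, (B v).Nonempty) ∧
    (∀ v, (H.induce (B v)).Connected) ∧
    (∀ u v, G.Adj u v → ∃ x ∈ B u, ∃ y ∈ B v, H.Adj x y)

/-- A class of graphs closed under taking minors. -/
def MinorClosed (C : GraphClass) : Prop :=
  ∀ (m n : ℕ) (G : SimpleGraph (Fin m)) (H : SimpleGraph (Fin n)),
    H ∈ C n → IsMinorOf G H → G ∈ C m

/-- Planarity, via Wagner's characterization: no `K₅` and no `K₃,₃` minor. -/
def IsPlanar {V : Type*} (G : SimpleGraph V) : Prop :=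
  ¬ IsMinorOf (SimpleGraph.completeGraph (Fin 5)) G ∧
  ¬ IsMinorOf (completeBipartiteGraph (Fin 3) (Fin 3)) G


/-! ### Walk formulations -/

/-- `v` can be reached from `u` by a walk inside `S`. -/
def RS {V : Type*} (G : SimpleGraph V) (S : Set V) (u v : V) : Prop :=
  ∃ w : G.Walk u v, ∀ x ∈ w.support, x ∈ S

/-- No cycle of `G` lies inside `S`. -/
def AcyS {V : Type*} (G : SimpleGraph V) (S : Set V) : Prop :=
  ∀ (v : V) (c : G.Walk v v), c.IsCycle → ¬ ∀ x ∈ c.support, x ∈ S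

section walks

variable {V : Type*} {G : SimpleGraph V}

lemma RS.mono {S S' : Set V} (h : S ⊆ S') {u v : V} (hr : RS G S u v) : RS G S' u v := by
  obtain ⟨w, hw⟩ := hr
  exact ⟨w, fun x hx => h (hw x hx)⟩

lemma RS.symm {S : Set V} {u v : V} (hr : RS G S u v) : RS G S v u := by
  obtain ⟨w, hw⟩ := hr
  exact ⟨w.reverse, fun x hx => hw x (by simpa using hx)⟩

lemma RS.trans {S : Set V} {u v x : V} (hr : RS G S u v) (hs : RS G S v x) : RS G S u x := by
  obtain ⟨w, hw⟩ := hr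
  obtain ⟨w', hw'⟩ := hs
  refine ⟨w.append w', fun z hz => ?_⟩
  rcases SimpleGraph.Walk.mem_support_append_iff _ _ |>.1 hz with h | h
  · exact hw z h
  · exact hw' z h

lemma RS.of_adj {S : Set V} {u v : V} (hu : u ∈ S) (hv : v ∈ S) (h : G.Adj u v) :
    RS G S u v := by
  refine ⟨.cons h .nil, fun z hz => ?_⟩
  simp at hz
  rcases hz with rfl | rfl <;> assumption

lemma RS.refl {S : Set V} {u : V} (hu : u ∈ S) : RS G S u u :=
  ⟨.nil, fun z hz => by simp at hz; exact hz ▸ hu⟩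

lemma RS.mem_right {S : Set V} {u v : V} (hr : RS G S u v) : v ∈ S := by
  obtain ⟨w, hw⟩ := hr
  exact hw v w.end_mem_support

lemma RS.mem_left {S : Set V} {u v : V} (hr : RS G S u v) : u ∈ S := by
  obtain ⟨w, hw⟩ := hr
  exact hw u w.start_mem_support

lemma RS.of_mem_support {S : Set V} {u v x : V} (w : G.Walk u v) (hw : ∀ x ∈ w.support, x ∈ S)
    (hx : x ∈ w.support) : RS G S u x :=
  ⟨w.takeUntil x hx, fun z hz => hw z (w.support_takeUntil_subset_support hx hz)⟩

lemma acyS_iff {S : Set V} : (G.induce S).IsAcyclic ↔ AcyS G S := by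
  constructor
  · intro h v c hc hS
    refine h (c.induce S hS) ?_
    have := SimpleGraph.Walk.map_induce c hS
    rw [← this] at hc
    exact (SimpleGraph.Walk.isCycle_map_iff_of_injective Subtype.val_injective).1 hc
  · intro h v c hc
    refine h _ (c.map (SimpleGraph.Embedding.induce S).toHom) ?_ ?_
    · exact (SimpleGraph.Walk.isCycle_map_iff_of_injective Subtype.val_injective).2 hc
    · intro x hx
      simp only [SimpleGraph.Walk.support_map, List.mem_map] at hx
      obtain ⟨y, _, rfl⟩ := hx
      exact y.2

lemma AcyS.mono {S S' : Set V} (h : S ⊆ S') (hr : AcyS G S') : AcyS G S :=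
  fun v c hc hS => hr v c hc fun x hx => h (hS x hx)

lemma reachable_iff {S : Set V} (u v : S) : (G.induce S).Reachable u v ↔ RS G S u v := by
  constructor
  · rintro ⟨w⟩
    refine ⟨w.map (SimpleGraph.Embedding.induce S).toHom, fun x hx => ?_⟩
    replace hx : x ∈ (w.map (SimpleGraph.Embedding.induce S).toHom).support := hx
    simp only [SimpleGraph.Walk.support_map, List.mem_map] at hx
    obtain ⟨y, _, rfl⟩ := hx
    exact y.2
  · rintro ⟨w, hw⟩
    exact ⟨w.induce S hw⟩

lemma compEdgeCount_eq {S : Set V} (v : S) : compEdgeCount (G.induce S) v =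
    {e | e ∈ G.edgeSet ∧ ∀ x ∈ e, RS G S v x}.ncard := by
  unfold compEdgeCount
  rw [← Set.ncard_image_of_injective _ (Sym2.map.injective Subtype.val_injective)]
  congr 1
  ext e
  constructor
  · rintro ⟨e', ⟨h1, h2⟩, rfl⟩
    induction e' using Sym2.ind with
    | _ x y =>
      simp at h1 h2
      simp [h1, ← reachable_iff, h2]
  · rintro ⟨h1, h2⟩
    induction e using Sym2.ind with
    | _ x y =>
      simp at h1 h2
      refine ⟨s(⟨x, h2.1.mem_right⟩, ⟨y, h2.2.mem_right⟩), ?_, by simp⟩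
      simp only [Set.mem_ofPred_eq, SimpleGraph.mem_edgeSet, SimpleGraph.comap_adj,
        Function.Embedding.subtype_apply, h1, true_and, Sym2.mem_iff, reachable_iff]
      rintro z (rfl | rfl)
      · exact h2.1
      · exact h2.2

end walks

section order

variable {V : Type*} [PartialOrder V] {G : SimpleGraph V}

lemma walk_min (hch : ∀ u v w : V, u ≤ w → v ≤ w → u ≤ v ∨ v ≤ u)
    (hadj : ∀ u v : V, G.Adj u v → u ≤ v ∨ v ≤ u) {u v : V} (w : G.Walk u v) :
    ∃ m ∈ w.support, ∀ x ∈ w.support, m ≤ x := by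
  induction w with
  | nil => simp
  | @cons a b c h p ih =>
    obtain ⟨m, hm, hmin⟩ := ih
    have hb := hmin b p.start_mem_support
    have key : a ≤ m ∨ m ≤ a := by
      rcases hadj _ _ h with h1 | h1
      · exact hch _ _ _ h1 hb
      · exact Or.inr (hb.trans h1)
    rcases key with h1 | h1
    · refine ⟨a, by simp, fun x hx => ?_⟩
      simp at hx
      rcases hx with rfl | hx
      · rfl
      · exact h1.trans (hmin x hx)
    · refine ⟨m, by simp [hm], fun x hx => ?_⟩
      simp at hx
      rcases hx with rfl | hx
      · exact h1
      · exact hmin x hx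

end order

section fin

variable {V : Type*} [Fintype V] [PartialOrder V] {G : SimpleGraph V}

/-- The number of strict ancestors. -/
noncomputable def lev (v : V) : ℕ := {u : V | u < v}.ncard

lemma lev_lt {u v : V} (h : u < v) : lev u < lev v := by
  apply Set.ncard_lt_ncard _ (Set.toFinite _)
  refine ⟨fun x hx => lt_trans hx h, fun hh => ?_⟩
  exact lt_irrefl u (hh h)

lemma lev_le {u v : V} (h : u ≤ v) : lev u ≤ lev v := by
  rcases h.eq_or_lt with rfl | h
  · rfl
  · exact (lev_lt h).le

lemma eq_of_lev {u v : V} (h : u ≤ v) (hl : lev v ≤ lev u) : u = v := by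
  rcases h.eq_or_lt with rfl | h
  · rfl
  · exact absurd (lev_lt h) (by omega)

lemma eq_of_lev_of_le (hch : ∀ u v w : V, u ≤ w → v ≤ w → u ≤ v ∨ v ≤ u)
    {u v w : V} (hu : u ≤ w) (hv : v ≤ w) (hl : lev u = lev v) : u = v := by
  rcases hch u v w hu hv with h | h
  · exact eq_of_lev h hl.ge
  · exact (eq_of_lev h hl.le).symm

/-- Gluing pieces at their centres. -/
lemma glue_acyclic (hch : ∀ u v w : V, u ≤ w → v ≤ w → u ≤ v ∨ v ≤ u)
    (hadj : ∀ u v : V, G.Adj u v → u ≤ v ∨ v ≤ u) (i s : ℕ) (his : i ≤ s)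
    (R : V → V → Prop) (P : V → V → Set V)
    (hlev : ∀ a σ, R a σ → lev a = i ∧ lev σ = s ∧ a ≤ σ)
    (hP : ∀ a σ, R a σ → a ∈ P a σ ∧ (∀ v ∈ P a σ, v = a ∨ σ ≤ v) ∧ AcyS G (P a σ)) :
    AcyS G {v | ∃ a σ, R a σ ∧ v ∈ P a σ} := by
  -- a set lying above a low vertex of a piece stays in that piece
  have key : ∀ a σ m, R a σ → m ∈ P a σ → i < lev m → ∀ v, m ≤ v →
      (∃ a' σ', R a' σ' ∧ v ∈ P a' σ') → v ∈ P a σ := by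
    rintro a σ m hR hm hlm v hmv ⟨a', σ', hR', hv⟩
    obtain ⟨h1, h2, h3⟩ := hlev _ _ hR
    obtain ⟨h1', h2', h3'⟩ := hlev _ _ hR'
    have hσm : σ ≤ m := by
      rcases (hP _ _ hR).2.1 m hm with rfl | h
      · omega
      · exact h
    have hlv := lev_le hmv
    have hσv : σ' ≤ v := by
      rcases (hP _ _ hR').2.1 v hv with rfl | h
      · omega
      · exact h
    have e1 : σ = σ' := eq_of_lev_of_le hch (hσm.trans hmv) hσv (by omega)
    subst e1
    have e2 : a = a' := eq_of_lev_of_le hch h3 h3' (by omega)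
    subst e2
    exact hv
  intro v c hc hS
  obtain ⟨m, hm, hmin⟩ := walk_min hch hadj c
  obtain ⟨a, σ, hR, hmP⟩ := hS m hm
  by_cases hlm : i < lev m
  · exact (hP _ _ hR).2.2 v c hc fun x hx => key a σ m hR hmP hlm x (hmin x hx) (hS x hx)
  · have hc' := hc.rotate hm
    have hsup : ∀ x, x ∈ (c.rotate m hm).support ↔ x ∈ c.support := fun x =>
      c.mem_support_rotate_iff m hm
    generalize hcr : c.rotate m hm = c' at hc' hsup
    cases c' with
    | nil => simp at hc'
    | @cons _ b _ h p =>
      have hp := ((SimpleGraph.Walk.cons_isCycle_iff _ _).1 hc').1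
      have hp2 := hp.reverse
      have hsp : ∀ x, x ∈ p.support ↔ x ∈ p.reverse.support := by simp
      generalize p.reverse = q at hp2 hsp
      cases q with
      | nil => exact h.ne rfl
      | @cons _ b' _ h' q =>
        obtain ⟨hq, hmq⟩ := (SimpleGraph.Walk.cons_isPath_iff _ _).1 hp2
        have hall : ∀ x, x ∈ c.support ↔ x = m ∨ x ∈ q.support := by
          intro x
          rw [← hsup, SimpleGraph.Walk.support_cons, List.mem_cons, hsp,
            SimpleGraph.Walk.support_cons, List.mem_cons]
          tauto
        obtain ⟨m', hm', hmin'⟩ := walk_min hch hadj q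
        have hm'c := (hall m').2 (Or.inr hm')
        have hmm' : m < m' := lt_of_le_of_ne (hmin m' hm'c) (by rintro rfl; exact hmq hm')
        obtain ⟨a', σ', hR', hmP'⟩ := hS m' hm'c
        have hl1 := (hlev _ _ hR').1
        have hl0 := (hlev _ _ hR)
        have hlm0 : lev m = i := by
          rcases (hP _ _ hR).2.1 m hmP with rfl | hh
          · exact hl0.1
          · have := lev_le hh
            omega
        have hl2 := lev_lt hmm'
        have hσ' : σ' ≤ m' := by
          rcases (hP _ _ hR').2.1 m' hmP' with rfl | hh
          · omega
          · exact hh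
        have hma : m = a' :=
          eq_of_lev_of_le hch hmm'.le (((hlev _ _ hR').2.2).trans hσ') (by omega)
        refine (hP _ _ hR').2.2 v c hc fun x hx => ?_
        rcases (hall x).1 hx with rfl | hxq
        · rw [hma]; exact (hP _ _ hR').1
        · exact key a' σ' m' hR' hmP' (by omega) x (hmin' x hxq) (hS x hx)

end fin

section codes

variable {V : Type*} [Fintype V] [PartialOrder V]

/-- The vertices at level `t` below `a` whose subtree contains a neighbour of `a`. -/
def seen (G : SimpleGraph V) (a : V) (t : ℕ) : Set V :=
  {w | lev w = t ∧ a < w ∧ ∃ v, w ≤ v ∧ G.Adj a v}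

/-- The code `c` tells to go from `p` to `q`. -/
def Step (G : SimpleGraph V) (col : V → ℕ → V → ℕ) (c : ℕ → ℕ) (p q : V) : Prop :=
  q ∈ seen G p (lev q) ∧ c (lev q) = 2 + col p (lev q) q ∧ ∀ t, lev p < t → t < lev q → c t = 0

/-- Following the code `c` from `q` (with predecessor `p`) ends in the edge `x y`. -/
inductive Chain (G : SimpleGraph V) (col : V → ℕ → V → ℕ) (c : ℕ → ℕ) : V → V → V → V → Prop
  | nil (x y : V) : (∀ t, lev y < t → c t = 0) → Chain G col c x y x y
  | cons (p q r x y : V) : Step G col c q r → Chain G col c q r x y → Chain G col c p q x y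

/-- A code together with the edge it encodes and an induced tree containing that edge. -/
structure Good (G : SimpleGraph V) (k : ℕ) (col : V → ℕ → V → ℕ) (c : ℕ → ℕ)
    (a σ x y : V) (T : Set V) : Prop where
  le : a ≤ σ
  ca : c (lev a) = 1
  cσ : c (lev σ) = 1
  czero : ∀ t, t < lev a → c t = 0
  cone : ∀ t, lev σ < t → c t ≠ 1
  chain : Chain G col c a σ x y
  acy : AcyS G T
  conn : ∀ v ∈ T, RS G T a v
  memx : x ∈ T
  memy : y ∈ T
  sub : ∀ v ∈ T, v = a ∨ σ ≤ v
  few : a = σ → k ≤ {e | e ∈ G.edgeSet ∧ ∀ z ∈ e, z ∈ T}.ncard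
  many : a ≠ σ → k ≤ (seen G a (lev σ)).ncard ∧ ∃ v ∈ T, σ ≤ v ∧ G.Adj a v

variable {G : SimpleGraph V} {col : V → ℕ → V → ℕ} {k : ℕ}

lemma Step.lt {c : ℕ → ℕ} {p q : V} (h : Step G col c p q) : p < q := h.1.2.1

lemma Step.unique (hcol : ∀ p t, Set.InjOn (col p t) (seen G p t)) {c : ℕ → ℕ} {p q q' : V}
    (h : Step G col c p q) (h' : Step G col c p q') : q = q' := by
  have e : lev q = lev q' := by
    have l1 := lev_lt h.lt
    have l2 := lev_lt h'.lt
    have n1 := h.2.1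
    have n2 := h'.2.1
    rcases lt_trichotomy (lev q) (lev q') with hl | hl | hl
    · have := h'.2.2 _ l1 hl
      omega
    · exact hl
    · have := h.2.2 _ l2 hl
      omega
  have h1 := h.1
  have h2 := h'.1
  have n1 := h.2.1
  have n2 := h'.2.1
  rw [← e] at h2 n2
  exact hcol p _ h1 h2 (by omega)

lemma Chain.unique (hcol : ∀ p t, Set.InjOn (col p t) (seen G p t)) {c : ℕ → ℕ}
    {p q x y x' y' : V} (h : Chain G col c p q x y) (h' : Chain G col c p q x' y') :
    x = x' ∧ y = y' := by
  induction h with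
  | nil x y h0 =>
    cases h' with
    | nil => exact ⟨rfl, rfl⟩
    | cons _ _ r _ _ hs _ =>
      have := h0 _ (lev_lt hs.lt)
      have := hs.2.1
      omega
  | cons p q r x y hs hc ih =>
    cases h' with
    | nil _ _ h0 =>
      have := h0 _ (lev_lt hs.lt)
      have := hs.2.1
      omega
    | cons _ _ r' _ _ hs' hc' =>
      obtain rfl := hs.unique hcol hs'
      exact ih hc'

lemma Chain.congr {c c' : ℕ → ℕ} {p q x y : V} (h : Chain G col c p q x y)
    (hcc : ∀ t, lev q < t → c t = c' t) : Chain G col c' p q x y := by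
  induction h with
  | nil x y h0 => exact .nil _ _ fun t ht => (hcc t ht) ▸ h0 t ht
  | cons p q r x y hs hc ih =>
    have hl := lev_lt hs.lt
    refine .cons _ _ r _ _ ⟨hs.1, ?_, ?_⟩ (ih fun t ht => hcc t (by omega))
    · rw [← hcc _ hl]; exact hs.2.1
    · intro t h1 h2
      rw [← hcc _ h1]; exact hs.2.2 t h1 h2

/-- All edges with a given code are covered by one strong forest. -/
lemma cover (hch : ∀ u v w : V, u ≤ w → v ≤ w → u ≤ v ∨ v ≤ u)
    (hadj : ∀ u v : V, G.Adj u v → u ≤ v ∨ v ≤ u)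
    (hcol : ∀ p t, Set.InjOn (col p t) (seen G p t)) (c : ℕ → ℕ) :
    ∃ F : Set V, IsStrongForest G k F ∧
      ∀ a σ x y T, Good G k col c a σ x y T → x ∈ F ∧ y ∈ F := by
  by_cases hne : ∃ a σ x y T, Good G k col c a σ x y T
  swap
  · refine ⟨∅, ⟨acyS_iff.2 fun v w hw hS => hS v w.start_mem_support, fun v => v.2.elim⟩, ?_⟩
    intro a σ x y T h
    exact absurd ⟨a, σ, x, y, T, h⟩ hne
  obtain ⟨a₀, σ₀, x₀, y₀, T₀, h₀⟩ := hne
  obtain ⟨i, hi⟩ : ∃ i, i = lev a₀ := ⟨_, rfl⟩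
  obtain ⟨s, hs⟩ : ∃ s, s = lev σ₀ := ⟨_, rfl⟩
  have his : i ≤ s := by rw [hi, hs]; exact lev_le h₀.le
  have hlevG : ∀ a σ x y T, Good G k col c a σ x y T → lev a = i ∧ lev σ = s := by
    intro a σ x y T h
    constructor
    · rcases lt_trichotomy (lev a) i with hl | hl | hl
      · have := h₀.czero _ (hi ▸ hl); have := h.ca; omega
      · exact hl
      · have := h.czero _ hl; have := h₀.ca; rw [← hi] at this; omega
    · rcases lt_trichotomy (lev σ) s with hl | hl | hl
      · exact absurd (hs ▸ h₀.cσ) (h.cone _ hl)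
      · exact hl
      · exact absurd h.cσ (h₀.cone _ (hs ▸ hl))
  -- the pieces
  let R : V → V → Prop := fun a σ => (∃ x y T, Good G k col c a σ x y T) ∨
    (lev a = i ∧ i < s ∧ k ≤ (seen G a s).ncard ∧ σ ∈ seen G a s)
  have hpieces : ∀ a σ, R a σ → ∃ P : Set V,
      (∀ v ∈ P, RS G P a v) ∧ a ∈ P ∧ (∀ v ∈ P, v = a ∨ σ ≤ v) ∧ AcyS G P ∧
      (i = s → k ≤ {e | e ∈ G.edgeSet ∧ ∀ z ∈ e, z ∈ P}.ncard) ∧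
      (i < s → k ≤ (seen G a s).ncard ∧ ∃ v ∈ P, σ ≤ v ∧ G.Adj a v) ∧
      (∀ x y T, Good G k col c a σ x y T → x ∈ P ∧ y ∈ P) := by
    intro a σ hR
    by_cases hex : ∃ x y T, Good G k col c a σ x y T
    · obtain ⟨x, y, T, h⟩ := hex
      have hl := hlevG _ _ _ _ _ h
      refine ⟨T, h.conn, (h.conn _ h.memx).mem_left, h.sub, h.acy, ?_, ?_, ?_⟩
      · intro his
        exact h.few (eq_of_lev h.le (by omega))
      · intro his
        have := h.many (by rintro rfl; omega)
        rw [hl.2] at this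
        exact this
      · intro x' y' T' h'
        obtain ⟨rfl, rfl⟩ := h.chain.unique hcol h'.chain
        exact ⟨h.memx, h.memy⟩
    · rcases hR with hR | ⟨h1, h2, h3, h4⟩
      · exact absurd hR hex
      obtain ⟨h5, h6, v, h7, h8⟩ := h4
      have hav : a ≠ v := h8.ne
      refine ⟨{a, v}, ?_, by simp, ?_, ?_, fun h => by omega, fun _ => ⟨h3, v, by simp, h7, h8⟩,
        fun x y T h => absurd ⟨x, y, T, h⟩ hex⟩
      · rintro u (rfl | rfl)
        · exact RS.refl (by simp)
        · exact RS.of_adj (by simp) (by simp) h8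
      · rintro u (rfl | rfl)
        · exact Or.inl rfl
        · exact Or.inr h7
      · intro u w hw hS
        have h3 := hw.three_le_length
        have hnd := hw.support_nodup
        have : w.support.tail.toFinset ⊆ {a, v} := by
          intro z hz
          have := hS z (List.mem_of_mem_tail (List.mem_toFinset.1 hz))
          simpa using this
        have hcard := Finset.card_le_card this
        rw [List.toFinset_card_of_nodup hnd] at hcard
        have := Finset.card_le_two (a := a) (b := v)
        simp at hcard
        omega
  choose! P hPconn hPa hPsub hPacy hPfew hPmany hPmem using hpieces
  have hRlev : ∀ a σ, R a σ → lev a = i ∧ lev σ = s ∧ a ≤ σ := by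
    rintro a σ (⟨x, y, T, h⟩ | ⟨h1, h2, h3, h4⟩)
    · exact ⟨(hlevG _ _ _ _ _ h).1, (hlevG _ _ _ _ _ h).2, h.le⟩
    · exact ⟨h1, h4.1, h4.2.1.le⟩
  refine ⟨{v | ∃ a σ, R a σ ∧ v ∈ P a σ}, ⟨?_, ?_⟩, ?_⟩
  · exact acyS_iff.2 (glue_acyclic hch hadj i s his R P hRlev
      fun a σ h => ⟨hPa a σ h, hPsub a σ h, hPacy a σ h⟩)
  · rintro ⟨v, a, σ, hR, hv⟩
    rw [compEdgeCount_eq]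
    set F : Set V := {v | ∃ a σ, R a σ ∧ v ∈ P a σ} with hF
    have hsubF : ∀ σ, R a σ → P a σ ⊆ F := fun σ h z hz => ⟨a, σ, h, hz⟩
    have hva : RS G F v a := ((hPconn a σ hR v hv).mono (hsubF σ hR)).symm
    have hreach : ∀ σ, R a σ → ∀ z ∈ P a σ, RS G F v z := fun σ' h z hz =>
      hva.trans ((hPconn a σ' h z hz).mono (hsubF σ' h))
    rcases his.eq_or_lt with his' | his'
    · refine (hPfew a σ hR his').trans (Set.ncard_le_ncard ?_ (Set.toFinite _))
      rintro e ⟨he, hz⟩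
      exact ⟨he, fun z hze => hreach σ hR z (hz z hze)⟩
    · have hk := (hPmany a σ hR his').1
      have hRs : ∀ τ ∈ seen G a s, R a τ := fun τ hτ =>
        Or.inr ⟨(hRlev _ _ hR).1, his', hk, hτ⟩
      have hnb : ∀ τ ∈ seen G a s, ∃ v ∈ P a τ, τ ≤ v ∧ G.Adj a v := fun τ hτ =>
        (hPmany a τ (hRs τ hτ) his').2
      choose! nb hnbP hnble hnbadj using hnb
      refine hk.trans (Set.ncard_le_ncard_of_injOn (fun τ => s(a, nb τ)) ?_ ?_ (Set.toFinite _))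
      · intro τ hτ
        refine ⟨hnbadj τ hτ, fun z hz => ?_⟩
        rcases Sym2.mem_iff.1 hz with rfl | rfl
        · exact hva
        · exact hreach τ (hRs τ hτ) _ (hnbP τ hτ)
      · intro τ hτ τ' hτ' he
        have he' : nb τ = nb τ' := by
          have he2 : s(a, nb τ) = s(a, nb τ') := he
          exact Sym2.congr_right.1 he2
        exact eq_of_lev_of_le hch (hnble τ hτ) (he' ▸ hnble τ' hτ') (hτ.1.trans hτ'.1.symm)
  · intro a σ x y T h
    have hR : R a σ := Or.inl ⟨x, y, T, h⟩
    have := hPmem a σ hR x y T h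
    exact ⟨⟨a, σ, hR, this.1⟩, ⟨a, σ, hR, this.2⟩⟩

/-- Conditions on a partial code starting below level `l`. -/
def OkCode (k d l : ℕ) (c : ℕ → ℕ) : Prop :=
  (∀ t, t ≤ l → c t = 0) ∧ (∀ t, c t ≠ 1) ∧ (∀ t, c t ≤ k) ∧ ∀ t, d ≤ t → c t = 0

/-- Outcome of the encoding with many branches. -/
def ManyOut (G : SimpleGraph V) (k d : ℕ) (col : V → ℕ → V → ℕ) (x y : V) : Prop :=
  ∃ c a σ T, Good G k col c a σ x y T ∧ (∀ t, c t ≤ k) ∧ ∀ t, d ≤ t → c t = 0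

lemma step_lemma (hk : 1 ≤ k) {d : ℕ} (hd : ∀ v : V, lev v < d)
    (hcolk : ∀ p t, ∀ w ∈ seen G p t, col p t w < (seen G p t).ncard)
    {q r x y : V} {T : Set V} {c : ℕ → ℕ} (hqr : q < r) (hc : Chain G col c q r x y)
    (hok : OkCode k d (lev r) c) (hacy : AcyS G T) (hconn : ∀ v ∈ T, RS G T q v)
    (hx : x ∈ T) (hy : y ∈ T) (hsub : ∀ v ∈ T, v = q ∨ r ≤ v)
    (hnb : ∃ v ∈ T, r ≤ v ∧ G.Adj q v) :
    ManyOut G k d col x y ∨ ∃ c, (∀ p, Chain G col c p q x y) ∧ OkCode k d (lev q) c := by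
  have hl := lev_lt hqr
  obtain ⟨o1, o2, o3, o4⟩ := hok
  have hseen : r ∈ seen G q (lev r) := by
    obtain ⟨v, _, h1, h2⟩ := hnb
    exact ⟨rfl, hqr, v, h1, h2⟩
  by_cases hm : k ≤ (seen G q (lev r)).ncard
  · left
    refine ⟨fun t => if t = lev q ∨ t = lev r then 1 else c t, q, r, T, ?_, ?_, ?_⟩
    · refine ⟨hqr.le, by simp, by simp, ?_, ?_, ?_, hacy, hconn, hx, hy, hsub, ?_, ?_⟩
      · intro t ht
        try simp only
        rw [if_neg (by omega)]
        exact o1 t (by omega)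
      · intro t ht
        try simp only
        rw [if_neg (by omega)]
        exact o2 t
      · refine hc.congr fun t ht => ?_
        try simp only
        rw [if_neg (by omega)]
      · intro h
        exact absurd h hqr.ne
      · intro _
        exact ⟨hm, hnb⟩
    · intro t
      try simp only
      split_ifs
      · exact hk
      · exact o3 t
    · intro t ht
      have h1 := hd q
      have h2 := hd r
      try simp only
      rw [if_neg (by omega)]
      exact o4 t ht
  · right
    have hlt := hcolk _ _ _ hseen
    refine ⟨fun t => if t = lev r then 2 + col q (lev r) r else c t, ?_, ?_, ?_, ?_, ?_⟩
    · intro p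
      refine .cons _ _ r _ _ ⟨hseen, by simp, ?_⟩ (hc.congr fun t ht => ?_)
      · intro t h1 h2
        try simp only
        rw [if_neg (by omega)]
        exact o1 t (by omega)
      · try simp only
        rw [if_neg (by omega)]
    · intro t ht
      try simp only
      rw [if_neg (by omega)]
      exact o1 t (by omega)
    · intro t
      try simp only
      split_ifs
      · omega
      · exact o2 t
    · intro t
      try simp only
      split_ifs
      · omega
      · exact o3 t
    · intro t ht
      have h2 := hd r
      try simp only
      rw [if_neg (by omega)]
      exact o4 t ht

lemma encode_path (hch : ∀ u v w : V, u ≤ w → v ≤ w → u ≤ v ∨ v ≤ u)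
    (hadj : ∀ u v : V, G.Adj u v → u ≤ v ∨ v ≤ u) (hk : 1 ≤ k) {d : ℕ} (hd : ∀ v : V, lev v < d)
    (hcolk : ∀ p t, ∀ w ∈ seen G p t, col p t w < (seen G p t).ncard)
    {x y : V} (hxy : G.Adj x y) (hlt : x < y) {S : Set V} (hS : AcyS G S) (hyS : y ∈ S) :
    ∀ (n : ℕ) (q : V) (w : G.Walk q x), w.length ≤ n → w.IsPath → (∀ v ∈ w.support, v ∈ S) →
      (∀ v ∈ w.support, q ≤ v) →
      ManyOut G k d col x y ∨ ∃ c, (∀ p, Chain G col c p q x y) ∧ OkCode k d (lev q) c := by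
  intro n
  induction n with
  | zero =>
    intro q w hn _ hwS _
    cases w with
    | cons h p => simp at hn
    | nil =>
      have hxS : x ∈ S := hwS x (by simp)
      refine step_lemma (T := {x, y}) (c := fun _ => 0) hk hd hcolk hlt (.nil _ _ fun _ _ => rfl)
        ⟨by simp, by simp, by simp, by simp⟩ (hS.mono ?_) ?_ (by simp) (by simp) ?_
        ⟨y, by simp, le_rfl, hxy⟩
      · rintro z (rfl | rfl) <;> assumption
      · rintro z (rfl | rfl)
        · exact RS.refl (by simp)
        · exact RS.of_adj (by simp) (by simp) hxy
      · rintro z (rfl | rfl)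
        · exact Or.inl rfl
        · exact Or.inr le_rfl
  | succ n ih =>
    intro q w hn hp hwS hmin
    cases w with
    | nil => exact ih x .nil (by simp) (by simp) hwS hmin
    | @cons _ b _ h p =>
      obtain ⟨hp1, hqp⟩ := (SimpleGraph.Walk.cons_isPath_iff _ _).1 hp
      obtain ⟨m, hm, hmmin⟩ := walk_min hch hadj p
      have hsupp : ∀ v ∈ p.support, v ∈ (SimpleGraph.Walk.cons h p).support := by
        intro v hv
        simp [hv]
      have hqm : q < m := lt_of_le_of_ne (hmin m (hsupp m hm)) (by rintro rfl; exact hqp hm)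
      have hsub := p.support_dropUntil_subset_support hm
      have hlen := p.length_dropUntil_le_length hm
      simp at hn
      rcases ih m (p.dropUntil m hm) (by omega) (hp1.dropUntil hm)
        (fun v hv => hwS v (hsupp v (hsub hv))) (fun v hv => hmmin v (hsub hv)) with
        hmany | ⟨c, hc, hok⟩
      · exact Or.inl hmany
      have hxm : m ≤ x := hmmin x p.end_mem_support
      set T : Set V := {v | v ∈ (SimpleGraph.Walk.cons h p).support ∨ v = y} with hT
      have hqx : RS G T q x := ⟨SimpleGraph.Walk.cons h p, fun v hv => Or.inl hv⟩
      refine step_lemma (T := T) (c := c) hk hd hcolk hqm (hc q) hok (hS.mono ?_) ?_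
        hqx.mem_right (Or.inr rfl) ?_ ⟨b, Or.inl ?_, hmmin b p.start_mem_support, h⟩
      · rintro z (hz | rfl)
        · exact hwS z hz
        · exact hyS
      · rintro z (hz | rfl)
        · exact RS.of_mem_support (SimpleGraph.Walk.cons h p) (fun v hv => Or.inl hv) hz
        · exact hqx.trans (RS.of_adj hqx.mem_right (Or.inr rfl) hxy)
      · rintro z (hz | rfl)
        · rw [SimpleGraph.Walk.support_cons, List.mem_cons] at hz
          rcases hz with hz | hz
          · exact Or.inl hz
          · exact Or.inr (hmmin z hz)
        · exact Or.inr (hxm.trans hlt.le)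
      · exact hsupp b p.start_mem_support

lemma encode (hch : ∀ u v w : V, u ≤ w → v ≤ w → u ≤ v ∨ v ≤ u)
    (hadj : ∀ u v : V, G.Adj u v → u ≤ v ∨ v ≤ u) (hk : 1 ≤ k) {d : ℕ} (hd : ∀ v : V, lev v < d)
    (hcolk : ∀ p t, ∀ w ∈ seen G p t, col p t w < (seen G p t).ncard)
    {x y : V} (hxy : G.Adj x y) (hlt : x < y) {S : Set V} (hS : IsStrongForest G k S)
    (hxS : x ∈ S) (hyS : y ∈ S) : ManyOut G k d col x y := by
  obtain ⟨hacy, hcount⟩ := hS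
  rw [acyS_iff] at hacy
  have hcount := hcount ⟨x, hxS⟩
  rw [compEdgeCount_eq] at hcount
  simp only at hcount
  set T : Set V := {v | RS G S x v} with hT
  have hTS : T ⊆ S := fun v hv => RS.mem_right hv
  have hxT : x ∈ T := RS.refl hxS
  have hyT : y ∈ T := RS.of_adj hxS hyS hxy
  -- connectivity of the component
  have hTc : ∀ v ∈ T, RS G T x v := by
    rintro v ⟨w, hw⟩
    exact ⟨w, fun z hz => RS.of_mem_support w hw hz⟩
  obtain ⟨z, hzT, hzmin⟩ := Set.exists_min_image T lev (Set.toFinite _) ⟨x, hxT⟩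
  have hTz : ∀ v ∈ T, RS G T z v := fun v hv => (hTc z hzT).symm.trans (hTc v hv)
  have hzle : ∀ v ∈ T, z ≤ v := by
    intro v hv
    obtain ⟨w, hw⟩ := hTz v hv
    obtain ⟨m, hm, hmmin⟩ := walk_min hch hadj w
    have h1 : m = z := eq_of_lev (hmmin z w.start_mem_support) (hzmin m (hw m hm))
    rw [← h1]
    exact hmmin v w.end_mem_support
  obtain ⟨w, hw⟩ := hTz x hxT
  have hw' : ∀ v ∈ w.bypass.support, v ∈ T := fun v hv =>
    hw v (w.support_bypass_subset_support hv)
  rcases encode_path hch hadj hk hd hcolk hxy hlt hacy hyS _ z w.bypass le_rfl w.bypass_isPath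
    (fun v hv => hTS (hw' v hv)) (fun v hv => hzle v (hw' v hv)) with hmany | ⟨c, hc, o1, o2, o3, o4⟩
  · exact hmany
  · refine ⟨fun t => if t = lev z then 1 else c t, z, z, T, ?_, ?_, ?_⟩
    · refine ⟨le_rfl, by simp, by simp, ?_, ?_, ?_, hacy.mono hTS, hTz, hxT, hyT,
        fun v hv => Or.inr (hzle v hv), fun _ => hcount, fun h => absurd rfl h⟩
      · intro t ht
        try simp only
        rw [if_neg (by omega)]
        exact o1 t (by omega)
      · intro t ht
        try simp only
        rw [if_neg (by omega)]
        exact o2 t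
      · refine (hc z).congr fun t ht => ?_
        try simp only
        rw [if_neg (by omega)]
    · intro t
      try simp only
      split_ifs
      · exact hk
      · exact o3 t
    · intro t ht
      have h1 := hd z
      try simp only
      rw [if_neg (by omega)]
      exact o4 t ht

lemma bound (hch : ∀ u v w : V, u ≤ w → v ≤ w → u ≤ v ∨ v ≤ u)
    (hadj : ∀ u v : V, G.Adj u v → u ≤ v ∨ v ≤ u) (hk : 1 ≤ k) {d : ℕ}
    (hd : ∀ v : V, lev v < d) : fStrong G k ≤ (2 * k) ^ d := by
  have hcolex : ∀ (p : V) (t : ℕ), ∃ f : V → ℕ, Set.InjOn f (seen G p t) ∧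
      ∀ w ∈ seen G p t, f w < (seen G p t).ncard := by
    intro p t
    have hfin := Set.toFinite (seen G p t)
    let e := Finite.equivFin (seen G p t)
    refine ⟨fun v => if h : v ∈ seen G p t then (e ⟨v, h⟩ : ℕ) else 0, ?_, ?_⟩
    · intro v hv w hw h
      simp only [hv, hw, dif_pos] at h
      have := e.injective (Fin.ext h)
      simpa using this
    · intro v hv
      simp only [hv, dif_pos]
      exact (e ⟨v, hv⟩).2
  choose col hcol hcolk using hcolex
  choose F hF hFmem using fun c : ℕ → ℕ => cover (G := G) (k := k) hch hadj hcol c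
  have hcard : Fintype.card (Fin d → Fin (2 * k)) = (2 * k) ^ d := by simp
  let en := (Fintype.equivFinOfCardEq hcard).symm
  let ext : (Fin d → Fin (2 * k)) → ℕ → ℕ := fun f t => if h : t < d then (f ⟨t, h⟩ : ℕ) else 0
  refine Nat.sInf_le ⟨fun j => F (ext (en j)), fun j => hF _, ?_⟩
  -- each edge in increasing form
  have main : ∀ x y : V, G.Adj x y → x < y → ∀ S : Set V, IsStrongForest G k S → x ∈ S → y ∈ S →
      ∃ j, x ∈ F (ext (en j)) ∧ y ∈ F (ext (en j)) := by
    intro x y hxy hlt S hS hx hy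
    obtain ⟨c, a, σ, T, hg, hck, hcd⟩ := encode (col := col) hch hadj hk hd hcolk hxy hlt hS hx hy
    refine ⟨en.symm fun t => ⟨c t, by have := hck t; omega⟩, ?_⟩
    have : ext (en (en.symm fun t : Fin d => ⟨c t, by have := hck t; omega⟩)) = c := by
      rw [Equiv.apply_symm_apply]
      funext t
      simp only [ext]
      split_ifs with h
      · rfl
      · exact (hcd t (by omega)).symm
    rw [this]
    exact hFmem c a σ x y T hg
  rintro e ⟨S, hS, he, hmem⟩
  induction e using Sym2.ind with
  | _ x y =>
    have hxy : G.Adj x y := he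
    have hx := hmem x (by simp)
    have hy := hmem y (by simp)
    have : ∃ j, x ∈ F (ext (en j)) ∧ y ∈ F (ext (en j)) := by
      rcases hadj x y hxy with h | h
      · exact main x y hxy (lt_of_le_of_ne h hxy.ne) S hS hx hy
      · obtain ⟨j, h1, h2⟩ := main y x hxy.symm (lt_of_le_of_ne h hxy.ne.symm) S hS hy hx
        exact ⟨j, h2, h1⟩
    obtain ⟨j, h1, h2⟩ := this
    refine ⟨j, he, fun z hz => ?_⟩
    rcases Sym2.mem_iff.1 hz with rfl | rfl <;> assumption

end codes

/-- For all positive integers `k` and `d`, every finite simple graph `G`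
of tree-depth at most `d` satisfies `f_k(G) ≤ (2k)^d`. -/
theorem fStrong_le_of_treedepth {V : Type} [Fintype V] (G : SimpleGraph V) (k d : ℕ)
    (hk : 1 ≤ k) (hd : 1 ≤ d) (htd : treedepth G ≤ d) :
    fStrong G k ≤ (2 * k) ^ d := by
  have hne : {d | HasTreedepthAtMost G d}.Nonempty := by
    let f := Fintype.equivFin V
    refine ⟨Fintype.card V, fun u v => f u ≤ f v,
      { refl := fun a => le_rfl
        trans := fun a b c => le_trans
        antisymm := fun a b h1 h2 => f.injective (le_antisymm h1 h2) }, ?_, ?_, ?_⟩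
    · intro v a _ b _ _
      exact le_total _ _
    · intro u v _
      exact le_total _ _
    · intro v
      exact (Set.ncard_le_card _).trans Nat.card_eq_fintype_card.le
  obtain ⟨le, hpo, hchain, hadj, hcard⟩ := Nat.sInf_mem hne
  letI : PartialOrder V :=
    { le := le
      le_refl := hpo.refl
      le_trans := hpo.trans
      le_antisymm := hpo.antisymm }
  refine bound (G := G) (d := d) ?_ hadj hk ?_
  · intro u v w hu hv
    by_cases h : u = v
    · exact Or.inl h.le
    · exact hchain w hu hv h
  · intro v
    refine lt_of_lt_of_le ?_ ((hcard v).trans htd)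
    apply Set.ncard_lt_ncard _ (Set.toFinite _)
    refine ⟨fun u hu => (le_of_lt hu : u ≤ v), fun hh => ?_⟩
    exact lt_irrefl v (hh (le_refl v))

end InducedArboricity
end

section
/- Every finite simple graph G of tree-depth at most d satisfies f_1(G) ≤ C(d, 2), where C(d,2) is the binomial coefficient (d choose 2); moreover this bound is attained by the complete graph K_d, which has tree-depth d and f_1(K_d) = C(d,2). -/
open scoped Classical
open scoped Function

namespace InducedArboricity

theorem level_lt {V : Type} [Fintype V] {le : V → V → Prop} (h : IsPartialOrder V le) {x y : V}
    (hxy : le x y) (hne : x ≠ y) : {u | le u x}.ncard < {u | le u y}.ncard := by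
  apply Set.ncard_lt_ncard _ (Set.toFinite _)
  refine ⟨fun u hu => h.trans _ _ _ hu hxy, fun hs => hne ?_⟩
  exact h.antisymm _ _ hxy (hs (h.refl y))

theorem acyclic_of_low {W : Type} (H : SimpleGraph W) (low : W → Prop)
    (h1 : ∀ x y, H.Adj x y → low x ∨ low y)
    (h2 : ∀ x y z, low x → H.Adj x y → H.Adj x z → y = z) : H.IsAcyclic := by
  have key : ∀ u (c : H.Walk u u), low u → ¬ c.IsCycle := by
    intro u c hu hc
    exact hc.snd_ne_penultimate
      (h2 u _ _ hu (c.adj_snd hc.not_nil) (c.adj_penultimate hc.not_nil).symm)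
  intro u c hc
  rcases h1 _ _ (c.adj_snd hc.not_nil) with h | h
  · exact key u c h hc
  · have hm : c.snd ∈ c.support := c.getVert_mem_support 1
    exact key _ (c.rotate _ hm) h (hc.rotate hm)

theorem exists_cover {V : Type} [Fintype V] (G : SimpleGraph V) (d : ℕ)
    (h : HasTreedepthAtMost G d) :
    ∃ F : Fin (d.choose 2) → Set V, (∀ i, IsStrongForest G 1 (F i)) ∧
      ∀ e ∈ G.edgeSet, ∃ i, e ∈ forestEdges G (F i) := by
  obtain ⟨le, hpo, hch, hadj, hd⟩ := h
  let l : V → ℕ := fun v => {u | le u v}.ncard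
  have hlt : ∀ x y, le x y → x ≠ y → l x < l y := fun x y => level_lt hpo
  have hl1 : ∀ v, 1 ≤ l v := fun v =>
    (Set.ncard_pos (Set.toFinite _)).2 ⟨v, hpo.refl v⟩
  have hle : ∀ x y, G.Adj x y → l x < l y → le x y := by
    intro x y hxy hl
    rcases hadj x y hxy with h | h
    · exact h
    · have := hlt y x h hxy.ne'
      omega
  have hladj : ∀ x y, G.Adj x y → l x ≠ l y := by
    intro x y hxy
    rcases hadj x y hxy with h | h
    · exact (hlt _ _ h hxy.ne).ne
    · exact (hlt _ _ h hxy.ne').ne'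
  have hcard : Fintype.card (Finset.powersetCard 2 (Finset.Icc 1 d)) = d.choose 2 := by
    simp
  let E := Fintype.equivFinOfCardEq hcard
  let S : Finset ℕ → Set V := fun p => {v | l v ∈ p ∧ ∃ w, l w ∈ p ∧ G.Adj v w}
  refine ⟨fun i => S (E.symm i).1, ?_, ?_⟩
  · intro i
    have hp := (Finset.mem_powersetCard.1 (E.symm i).2).2
    dsimp only
    generalize (E.symm i).1 = p at hp ⊢
    constructor
    · obtain ⟨a, b, hab, rfl⟩ : ∃ a b : ℕ, a < b ∧ p = {a, b} := by
        obtain ⟨a, b, hab, rfl⟩ := Finset.card_eq_two.1 hp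
        rcases lt_or_gt_of_ne hab with h | h
        · exact ⟨a, b, h, rfl⟩
        · exact ⟨b, a, h, Finset.pair_comm _ _⟩
      have hS : ∀ x : S {a, b}, l x = a ∨ l x = b := by
        intro x
        have := x.2.1
        simpa using this
      apply acyclic_of_low _ (fun x => l x.1 = b)
      · intro x y hxy
        have : l x.1 ≠ l y.1 := hladj _ _ hxy
        have h1 := hS x
        have h2 := hS y
        omega
      · intro x y z hx hxy hxz
        have hxy' : G.Adj x.1 y.1 := hxy
        have hxz' : G.Adj x.1 z.1 := hxz
        have n1 := hladj _ _ hxy'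
        have n2 := hladj _ _ hxz'
        have h1 := hS y
        have h2 := hS z
        have hy := hle _ _ hxy'.symm (by omega)
        have hz := hle _ _ hxz'.symm (by omega)
        by_contra hne
        have hne' : y.1 ≠ z.1 := fun h => hne (Subtype.ext h)
        rcases hch x.1 hy hz hne' with h | h
        · have := hlt _ _ h hne'
          omega
        · have := hlt _ _ h hne'.symm
          omega
    · rintro ⟨v, hv, w, hw, hvw⟩
      have hwS : w ∈ S p := ⟨hw, v, hv, hvw.symm⟩
      have hA : (G.induce (S p)).Adj ⟨v, hv, w, hw, hvw⟩ ⟨w, hwS⟩ := hvw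
      refine (Set.ncard_pos (Set.toFinite _)).2 ⟨s(⟨v, hv, w, hw, hvw⟩, ⟨w, hwS⟩), hA, ?_⟩
      intro x hx
      rcases Sym2.mem_iff.1 hx with rfl | rfl
      · exact SimpleGraph.Reachable.refl _
      · exact hA.reachable
  · intro e
    induction e with
    | h x y =>
      intro hxy
      have hxy' : G.Adj x y := hxy
      have hm : ({l x, l y} : Finset ℕ) ∈ Finset.powersetCard 2 (Finset.Icc 1 d) := by
        rw [Finset.mem_powersetCard]
        refine ⟨?_, Finset.card_pair (hladj x y hxy)⟩
        intro k hk
        simp only [Finset.mem_insert, Finset.mem_singleton] at hk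
        rw [Finset.mem_Icc]
        rcases hk with rfl | rfl
        · exact ⟨hl1 _, hd _⟩
        · exact ⟨hl1 _, hd _⟩
      refine ⟨E ⟨_, hm⟩, hxy, ?_⟩
      intro z hz
      dsimp only
      rw [Equiv.symm_apply_apply]
      rcases Sym2.mem_iff.1 hz with rfl | rfl
      · exact ⟨by simp, y, by simp, hxy'⟩
      · exact ⟨by simp, x, by simp, hxy'.symm⟩

theorem fStrong_le {V : Type} [Fintype V] (G : SimpleGraph V) (d : ℕ)
    (h : HasTreedepthAtMost G d) : fStrong G 1 ≤ d.choose 2 := by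
  obtain ⟨F, h1, h2⟩ := exists_cover G d h
  refine Nat.sInf_le ⟨F, h1, ?_⟩
  rintro e ⟨S, -, he⟩
  exact h2 e he.1

theorem exists_treedepth {V : Type} [Fintype V] (G : SimpleGraph V) :
    ∃ d, HasTreedepthAtMost G d := by
  let f := Fintype.equivFin V
  refine ⟨Fintype.card V, fun x y => f x ≤ f y, ?_, ?_, ?_, ?_⟩
  · exact { refl := fun x => le_refl _
            trans := fun x y z => le_trans
            antisymm := fun x y h1 h2 => f.injective (le_antisymm h1 h2) }
  · intro v x _ y _ _
    exact le_total _ _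
  · intro x y _
    exact le_total _ _
  · intro v
    exact (Set.ncard_le_card _).trans_eq Nat.card_eq_fintype_card

theorem treedepth_complete (d : ℕ) : HasTreedepthAtMost (SimpleGraph.completeGraph (Fin d)) d := by
  refine ⟨fun x y => x ≤ y, ?_, ?_, ?_, ?_⟩
  · infer_instance
  · intro v x _ y _ _
    exact le_total _ _
  · intro x y _
    exact le_total _ _
  · intro v
    have := Set.ncard_le_card {u | u ≤ v}
    simpa using this

theorem le_treedepth_complete (d m : ℕ)
    (h : HasTreedepthAtMost (SimpleGraph.completeGraph (Fin d)) m) : d ≤ m := by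
  rcases Nat.eq_zero_or_pos d with rfl | hd
  · exact Nat.zero_le _
  obtain ⟨le, hpo, hch, hadj, hm⟩ := h
  have : Nonempty (Fin d) := ⟨⟨0, hd⟩⟩
  obtain ⟨v, hv⟩ := Finite.exists_max (fun v => {u | le u v}.ncard)
  have : {u | le u v} = Set.univ := by
    ext u
    simp only [Set.mem_setOf_eq, Set.mem_univ, iff_true]
    by_cases hne : u = v
    · subst hne
      exact hpo.refl u
    rcases hadj u v hne with h | h
    · exact h
    · exact absurd (level_lt hpo h (Ne.symm hne)) (not_lt.2 (hv u))
  have h2 := hm v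
  rw [this, Set.ncard_univ] at h2
  simpa using h2

theorem no_triangle {V : Type} (G : SimpleGraph V) (S : Set V) (h : (G.induce S).IsAcyclic)
    {a b c : V} (ha : a ∈ S) (hb : b ∈ S) (hc : c ∈ S) (hab : G.Adj a b) (hbc : G.Adj b c)
    (hca : G.Adj c a) : False := by
  have h1 : (G.induce S).Adj ⟨a, ha⟩ ⟨b, hb⟩ := hab
  have h2 : (G.induce S).Adj ⟨b, hb⟩ ⟨c, hc⟩ := hbc
  have h3 : (G.induce S).Adj ⟨c, hc⟩ ⟨a, ha⟩ := hca
  refine h (SimpleGraph.Walk.cons h1 (.cons h2 (.cons h3 .nil))) ?_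
  rw [SimpleGraph.Walk.cons_isCycle_iff]
  simp [hab.ne, hab.ne', hbc.ne, hbc.ne', hca.ne, hca.ne']

theorem forest_edge_unique (d : ℕ) (S : Set (Fin d))
    (h : ((SimpleGraph.completeGraph (Fin d)).induce S).IsAcyclic) {e e' : Sym2 (Fin d)}
    (he : e ∈ forestEdges (SimpleGraph.completeGraph (Fin d)) S)
    (he' : e' ∈ forestEdges (SimpleGraph.completeGraph (Fin d)) S) : e = e' := by
  induction e with
  | h a b =>
    obtain ⟨hab, h1⟩ := he
    obtain ⟨hcd, h2⟩ := he'
    have key : ∀ x ∈ e', x ∈ s(a, b) := by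
      intro x hx
      by_contra hn
      rw [Sym2.mem_iff, not_or] at hn
      exact no_triangle _ S h (h1 a (by simp)) (h1 b (by simp)) (h2 x hx) hab
        (show b ≠ x from fun h => hn.2 h.symm) (show x ≠ a from hn.1)
    induction e' with
    | h c d =>
      have hab' : a ≠ b := hab
      have hcd' : c ≠ d := hcd
      have k1 := key c (by simp)
      have k2 := key d (by simp)
      rw [Sym2.mem_iff] at k1 k2
      rw [Sym2.eq_iff]
      grind

theorem choose_le_fStrong (d : ℕ) :
    d.choose 2 ≤ fStrong (SimpleGraph.completeGraph (Fin d)) 1 := by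
  obtain ⟨F, h1, h2⟩ := exists_cover _ d (treedepth_complete d)
  refine le_csInf ⟨d.choose 2, F, h1, fun e ⟨S, _, he⟩ => h2 e he.1⟩ ?_
  rintro N ⟨F', h3, h4⟩
  have h5 : ∀ e : (SimpleGraph.completeGraph (Fin d)).edgeSet,
      ∃ i, e.1 ∈ forestEdges (SimpleGraph.completeGraph (Fin d)) (F' i) := by
    intro e
    obtain ⟨i, hi⟩ := h2 e.1 e.2
    exact h4 e.1 ⟨F i, h1 i, hi⟩
  choose g hg using h5
  have hinj : Function.Injective g := by
    intro e e' hee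
    apply Subtype.ext
    apply forest_edge_unique d (F' (g e)) (h3 _).1 (hg e)
    rw [hee]
    exact hg e'
  have h6 := Fintype.card_le_of_injective g hinj
  rw [Fintype.card_fin] at h6
  refine le_trans (le_of_eq ?_) h6
  have h7 := SimpleGraph.card_edgeFinset_top_eq_card_choose_two (V := Fin d)
  rw [Fintype.card_fin, SimpleGraph.edgeFinset_card] at h7
  rw [← h7]

/-- Every finite simple graph of tree-depth at most `d` satisfies
`f₁(G) ≤ (d choose 2)`; moreover this bound is attained by the complete graph `K_d`,
which has tree-depth `d` and `f₁(K_d) = (d choose 2)`. -/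
theorem fStrong_one_le_of_treedepth :
    (∀ (V : Type) [Fintype V] (G : SimpleGraph V) (d : ℕ), treedepth G ≤ d →
      fStrong G 1 ≤ d.choose 2) ∧
    (∀ d : ℕ, treedepth (SimpleGraph.completeGraph (Fin d)) = d ∧
      fStrong (SimpleGraph.completeGraph (Fin d)) 1 = d.choose 2) := by
  refine ⟨?_, ?_⟩
  · intro V _ G d hd
    have hm : HasTreedepthAtMost G (treedepth G) := Nat.sInf_mem (exists_treedepth G)
    exact (fStrong_le G _ hm).trans (Nat.choose_le_choose 2 hd)
  · intro d
    refine ⟨le_antisymm (Nat.sInf_le (treedepth_complete d)) ?_, le_antisymm ?_ ?_⟩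
    · exact le_csInf ⟨d, treedepth_complete d⟩ fun m hm => le_treedepth_complete d m hm
    · exact fStrong_le _ d (treedepth_complete d)
    · exact choose_le_fStrong d

end InducedArboricity
end
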